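/- Under Assumption 1 or Assumption 2, suppose the minimax a posteriori error ρ̂(ℓ) is finite for every direction ℓ ∈ 𝓗 (equivalently R(L*) + R(H*) = 𝓗), and let φ̂ ∈ D(L) together with q̂ solve L*q̂ = H*Q2(y − H φ̂), L φ̂ = Q1⁻¹ q̂. Then φ̂ is a Chebyshev center of the a posteriori set G_y: inf_{φ ∈ G_y} sup_{x ∈ G_y} ‖φ − x‖ = sup_{x ∈ G_y} ‖φ̂ − x‖ = (1 − (Q2 y, y − H φ̂))^{1/2} · max_{‖ℓ‖ = 1} σ̂(ℓ). -/

import Mathlib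

/-!
Write `E(d) = (Q1 Ld, Ld) + (Q2 Hd, Hd)` for the energy of `d ∈ D(L)`.  The system solved by
`(q̂, φ̂)` is the Euler–Lagrange system of the functional defining `G_y`, so completing the square
gives `G_y = φ̂ + {d : E(d) ≤ κ}` with `κ = 1 - (Q2 y, y - H φ̂)` (`mem_aPostSet_iff`).  This set is
symmetric about `φ̂`; for any `φ`, one of `φ̂ ± d` lies at distance at least `‖d‖` from `φ`, which
makes `φ̂` a Chebyshev center.

The value of the radius rests on the duality `σ̂(ℓ) = sup {|(ℓ, d)| : E(d) ≤ 1}`, after which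
homogeneity and `‖d‖ = max {(ℓ, d) : ‖ℓ‖ = 1}` give the formula.  For `≤` (`minimaxErr_le`),
a functional bounded by `C` on the energy ball factors through `d ↦ (Ld, Hd)`; Hahn–Banach with the
energy seminorm as majorant, followed by the Riesz theorem in `𝓕` and in `𝓨`, writes it as
`(Q1 z, Ld) + (Q2 u, Hd)` with `(Q1 z, z) + (Q2 u, u) ≤ C²` (`exists_dual_representation`), and the
linear estimate with weight `Q2 u` has error at most `C²`.  For `≥` (`le_minimaxErr`), every affine
estimate is tested on signals `± s d` with symmetric two-point noise `± t Hd`.  Finiteness of `ρ̂`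
guarantees that `σ̂` is finite when `κ > 0`, and that `G_y` is a single point when `κ = 0`.
-/

/-!
Minimax a posteriori estimation: **Theorem 3 (Chebyshev center part)**.
If the minimax a posteriori error is finite in every direction and
`(q̂, φ̂)` solves `L* q̂ = H* Q2 (y − H φ̂)`, `L φ̂ = Q1⁻¹ q̂`, then `φ̂` is a
Chebyshev center of `G_y` and
`inf_{φ ∈ G_y} sup_{x ∈ G_y} ‖φ − x‖ = sup_{x ∈ G_y} ‖φ̂ − x‖
  = (1 − (Q2 y, y − H φ̂))^{1/2} max_{‖ℓ‖=1} σ̂(ℓ)`.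
-/

open MeasureTheory
open scoped ENNReal RealInnerProductSpace

/-- A noise distribution is admissible if it is a zero-mean probability measure
with `E (Q2 η, η) ≤ 1`. -/
def AdmissibleNoise {𝓨 : Type*} [NormedAddCommGroup 𝓨] [InnerProductSpace ℝ 𝓨]
    [MeasurableSpace 𝓨] (Q2 : 𝓨 →L[ℝ] 𝓨) (μ : Measure 𝓨) : Prop :=
  IsProbabilityMeasure μ ∧ Integrable id μ ∧ (∫ η, η ∂μ) = 0 ∧
    (∫⁻ η, ENNReal.ofReal ⟪Q2 η, η⟫ ∂μ) ≤ 1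

/-- The worst-case mean-squared error `σ(ℓ, u, c)` of the affine estimate
`(u, y) + c` of `(ℓ, φ)`. -/
noncomputable def worstErr {𝓗 𝓕 𝓨 : Type*}
    [NormedAddCommGroup 𝓗] [InnerProductSpace ℝ 𝓗]
    [NormedAddCommGroup 𝓕] [InnerProductSpace ℝ 𝓕]
    [NormedAddCommGroup 𝓨] [InnerProductSpace ℝ 𝓨] [MeasurableSpace 𝓨]
    (L : 𝓗 →ₗ.[ℝ] 𝓕) (H : 𝓗 →L[ℝ] 𝓨) (Q1 : 𝓕 →L[ℝ] 𝓕) (Q2 : 𝓨 →L[ℝ] 𝓨)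
    (ℓ : 𝓗) (u : 𝓨) (c : ℝ) : ℝ≥0∞ :=
  ⨆ (φ : L.domain) (_ : ⟪Q1 (L φ), L φ⟫ ≤ 1) (μ : Measure 𝓨)
      (_ : AdmissibleNoise Q2 μ),
    ∫⁻ η, ENNReal.ofReal ((⟪ℓ, (φ : 𝓗)⟫ - ⟪u, H φ + η⟫ - c) ^ 2) ∂μ

/-- The squared minimax a priori error `σ̂(ℓ)² = inf_{u,c} σ(ℓ, u, c)`. -/
noncomputable def minimaxErr {𝓗 𝓕 𝓨 : Type*}
    [NormedAddCommGroup 𝓗] [InnerProductSpace ℝ 𝓗]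
    [NormedAddCommGroup 𝓕] [InnerProductSpace ℝ 𝓕]
    [NormedAddCommGroup 𝓨] [InnerProductSpace ℝ 𝓨] [MeasurableSpace 𝓨]
    (L : 𝓗 →ₗ.[ℝ] 𝓕) (H : 𝓗 →L[ℝ] 𝓨) (Q1 : 𝓕 →L[ℝ] 𝓕) (Q2 : 𝓨 →L[ℝ] 𝓨)
    (ℓ : 𝓗) : ℝ≥0∞ :=
  ⨅ (u : 𝓨) (c : ℝ), worstErr L H Q1 Q2 ℓ u c

/-- The a posteriori set
`G_y = {φ ∈ D(L) : (Q1 Lφ, Lφ) + (Q2 (y − Hφ), y − Hφ) ≤ 1}`. -/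
def aPostSet {𝓗 𝓕 𝓨 : Type*}
    [NormedAddCommGroup 𝓗] [InnerProductSpace ℝ 𝓗]
    [NormedAddCommGroup 𝓕] [InnerProductSpace ℝ 𝓕]
    [NormedAddCommGroup 𝓨] [InnerProductSpace ℝ 𝓨]
    (L : 𝓗 →ₗ.[ℝ] 𝓕) (H : 𝓗 →L[ℝ] 𝓨) (Q1 : 𝓕 →L[ℝ] 𝓕) (Q2 : 𝓨 →L[ℝ] 𝓨)
    (y : 𝓨) : Set 𝓗 :=
  {φ | ∃ hφ : φ ∈ L.domain,
    ⟪Q1 (L ⟨φ, hφ⟩), L ⟨φ, hφ⟩⟫ + ⟪Q2 (y - H φ), y - H φ⟫ ≤ 1}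

/-- The minimax a posteriori error
`ρ̂(ℓ) = inf_{φ ∈ G_y} sup_{ψ ∈ G_y} |(ℓ, φ) − (ℓ, ψ)|`. -/
noncomputable def rhoHat {𝓗 𝓕 𝓨 : Type*}
    [NormedAddCommGroup 𝓗] [InnerProductSpace ℝ 𝓗]
    [NormedAddCommGroup 𝓕] [InnerProductSpace ℝ 𝓕]
    [NormedAddCommGroup 𝓨] [InnerProductSpace ℝ 𝓨]
    (L : 𝓗 →ₗ.[ℝ] 𝓕) (H : 𝓗 →L[ℝ] 𝓨) (Q1 : 𝓕 →L[ℝ] 𝓕) (Q2 : 𝓨 →L[ℝ] 𝓨)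
    (y : 𝓨) (ℓ : 𝓗) : ℝ≥0∞ :=
  ⨅ (φ : 𝓗) (_ : φ ∈ aPostSet L H Q1 Q2 y),
    ⨆ (ψ : 𝓗) (_ : ψ ∈ aPostSet L H Q1 Q2 y), ENNReal.ofReal |⟪ℓ, φ⟫ - ⟪ℓ, ψ⟫|

/-! ### The energy form and dual representations -/

/-- The energy `(Q1 f, f') + (Q2 v, v')` as a bilinear form on `𝓕 × 𝓨`. -/
noncomputable def energyForm {𝓕 𝓨 : Type*}
    [NormedAddCommGroup 𝓕] [InnerProductSpace ℝ 𝓕]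
    [NormedAddCommGroup 𝓨] [InnerProductSpace ℝ 𝓨]
    (Q1 : 𝓕 →L[ℝ] 𝓕) (Q2 : 𝓨 →L[ℝ] 𝓨) : LinearMap.BilinForm ℝ (𝓕 × 𝓨) :=
  LinearMap.mk₂ ℝ (fun p p' => ⟪Q1 p.1, p'.1⟫ + ⟪Q2 p.2, p'.2⟫)
    (fun p p' r => by simp only [Prod.fst_add, Prod.snd_add, map_add, inner_add_left]; ring)
    (fun c p r => by
      simp only [Prod.smul_fst, Prod.smul_snd, map_smul, real_inner_smul_left, smul_eq_mul]; ring)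
    (fun p p' r => by simp only [Prod.fst_add, Prod.snd_add, inner_add_right]; ring)
    (fun c p r => by
      simp only [Prod.smul_fst, Prod.smul_snd, real_inner_smul_right, smul_eq_mul]; ring)

theorem energyForm_apply {𝓕 𝓨 : Type*}
    [NormedAddCommGroup 𝓕] [InnerProductSpace ℝ 𝓕]
    [NormedAddCommGroup 𝓨] [InnerProductSpace ℝ 𝓨]
    (Q1 : 𝓕 →L[ℝ] 𝓕) (Q2 : 𝓨 →L[ℝ] 𝓨) (p p' : 𝓕 × 𝓨) :
    energyForm Q1 Q2 p p' = ⟪Q1 p.1, p'.1⟫ + ⟪Q2 p.2, p'.2⟫ := rfl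

/-- Cauchy–Schwarz for a positive semidefinite operator. -/
theorem psd_cauchy_schwarz {E : Type*} [NormedAddCommGroup E] [InnerProductSpace ℝ E]
    (Q : E →L[ℝ] E) (hs : ∀ x y, ⟪Q x, y⟫ = ⟪Q y, x⟫) (hp : ∀ x, 0 ≤ ⟪Q x, x⟫) (x y : E) :
    ⟪Q x, y⟫ ^ 2 ≤ ⟪Q x, x⟫ * ⟪Q y, y⟫ := by
  have h := discrim_le_zero (a := ⟪Q y, y⟫) (b := 2 * ⟪Q x, y⟫) (c := ⟪Q x, x⟫) (fun t => by
    have := hp (x + t • y)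
    simp only [map_add, map_smul, inner_add_left, inner_add_right, real_inner_smul_left,
      real_inner_smul_right, hs y x] at this
    linarith)
  unfold discrim at h
  linarith

/-- The energy seminorm of a positive semidefinite form is subadditive, hence a Hahn–Banach
majorant. -/
theorem sqrt_add_le_of_cauchy_schwarz {M : Type*} [AddCommGroup M] [Module ℝ M]
    (B : LinearMap.BilinForm ℝ M) (hp : ∀ x, 0 ≤ B x x) (hs : ∀ x y, B x y = B y x) (x y : M) :
    Real.sqrt (B (x + y) (x + y)) ≤ Real.sqrt (B x x) + Real.sqrt (B y y) := by
  have h1 : B x y ≤ Real.sqrt (B x x) * Real.sqrt (B y y) := by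
    rw [← Real.sqrt_mul (hp x)]
    exact Real.le_sqrt_of_sq_le (LinearMap.BilinForm.apply_sq_le_of_symm B hp ⟨hs⟩ x y)
  rw [Real.sqrt_le_left (by positivity)]
  simp only [map_add, LinearMap.add_apply, hs y x]
  nlinarith [Real.sq_sqrt (hp x), Real.sq_sqrt (hp y)]

/-- Riesz-type representation with sharp constant: a direction `ℓ` bounded by `C` on the energy
ball `{(Q1 Ld, Ld) + (Q2 Hd, Hd) ≤ 1}` is, weakly, `L*(Q1 z) + H*(Q2 u)` with the energy of
`(z, u)` at most `C²`. The functional is extended from the range of `(L, H)` by Hahn–Banach. -/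
theorem exists_dual_representation {𝓗 𝓕 𝓨 : Type*}
    [NormedAddCommGroup 𝓗] [InnerProductSpace ℝ 𝓗]
    [NormedAddCommGroup 𝓕] [InnerProductSpace ℝ 𝓕] [CompleteSpace 𝓕]
    [NormedAddCommGroup 𝓨] [InnerProductSpace ℝ 𝓨] [CompleteSpace 𝓨]
    (L : 𝓗 →ₗ.[ℝ] 𝓕) (H : 𝓗 →L[ℝ] 𝓨) (Q1 : 𝓕 ≃L[ℝ] 𝓕) (Q2 : 𝓨 ≃L[ℝ] 𝓨)
    (hs1 : ∀ x y, ⟪Q1 x, y⟫ = ⟪Q1 y, x⟫) (hs2 : ∀ x y, ⟪Q2 x, y⟫ = ⟪Q2 y, x⟫)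
    (hp1 : ∀ x, 0 ≤ ⟪Q1 x, x⟫) (hp2 : ∀ x, 0 ≤ ⟪Q2 x, x⟫) (ℓ : 𝓗) (C : ℝ) (hC : 0 ≤ C)
    (hb : ∀ d : L.domain, ⟪Q1 (L d), L d⟫ + ⟪Q2 (H d), H d⟫ ≤ 1 → |⟪ℓ, (d : 𝓗)⟫| ≤ C) :
    ∃ (z : 𝓕) (u : 𝓨), (∀ d : L.domain, ⟪ℓ, (d : 𝓗)⟫ = ⟪Q1 z, L d⟫ + ⟪Q2 u, H d⟫) ∧
      ⟪Q1 z, z⟫ + ⟪Q2 u, u⟫ ≤ C ^ 2 := by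
  set B := energyForm (Q1 : 𝓕 →L[ℝ] 𝓕) (Q2 : 𝓨 →L[ℝ] 𝓨) with hB
  have hBp : ∀ p, 0 ≤ B p p := fun p => add_nonneg (hp1 _) (hp2 _)
  have hBs : ∀ p p', B p p' = B p' p := fun p p' => congrArg₂ (· + ·) (hs1 _ _) (hs2 _ _)
  let N : 𝓕 × 𝓨 → ℝ := fun p => C * Real.sqrt (B p p)
  let T : L.domain →ₗ[ℝ] 𝓕 × 𝓨 := L.toFun.prod (H.toLinearMap ∘ₗ L.domain.subtype)
  have hTB : ∀ d, B (T d) (T d) = ⟪Q1 (L d), L d⟫ + ⟪Q2 (H d), H d⟫ := fun d => rfl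
  have hbN : ∀ d : L.domain, |⟪ℓ, (d : 𝓗)⟫| ≤ N (T d) := by
    intro d
    -- rescale by `s` slightly above the energy norm, so that zero energy needs no separate case
    refine le_of_forall_pos_le_add fun ε hε => ?_
    set δ := ε / (C + 1) with hδ
    have hδ0 : 0 < δ := by positivity
    set s := Real.sqrt (B (T d) (T d)) + δ with hs
    have hs0 : 0 < s := by positivity
    have h := hb (s⁻¹ • d) (by
      rw [← hTB]
      simp only [map_smul, LinearMap.smul_apply, smul_eq_mul]
      have h2 : B (T d) (T d) ≤ s ^ 2 := by
        have := Real.sq_sqrt (hBp (T d))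
        nlinarith [Real.sqrt_nonneg (B (T d) (T d))]
      rw [← mul_assoc, ← mul_inv, inv_mul_le_iff₀ (by positivity)]
      nlinarith)
    rw [Submodule.coe_smul, real_inner_smul_right, abs_mul, abs_of_pos (inv_pos.2 hs0),
      inv_mul_le_iff₀ hs0] at h
    have h3 : C * δ ≤ ε := by
      rw [hδ, ← mul_div_assoc, div_le_iff₀ (by positivity)]
      nlinarith
    calc _ ≤ s * C := h
      _ = N (T d) + C * δ := by simp only [hs, N]; ring
      _ ≤ _ := by gcongr
  obtain ⟨S, hS⟩ := T.rangeRestrict.exists_rightInverse_of_surjective T.range_rangeRestrict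
  have hTS : ∀ p, T (S p) = p := fun p => congrArg Subtype.val (LinearMap.congr_fun hS p)
  let f : 𝓕 × 𝓨 →ₗ.[ℝ] ℝ :=
    ⟨T.range, ((innerSL ℝ ℓ).toLinearMap ∘ₗ L.domain.subtype) ∘ₗ S⟩
  obtain ⟨g, hgf, hgN⟩ := exists_extension_of_le_sublinear f N
    (fun c hc p => by
      simp only [N, map_smul, LinearMap.smul_apply, smul_eq_mul]
      rw [← mul_assoc, Real.sqrt_mul (by positivity), Real.sqrt_mul_self hc.le]
      ring)
    (fun p p' => by
      simp only [N, ← mul_add]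
      exact mul_le_mul_of_nonneg_left (sqrt_add_le_of_cauchy_schwarz B hBp hBs p p') hC)
    (fun p => by
      have := hbN (S p)
      rw [hTS] at this
      exact (le_abs_self _).trans this)
  have hgT : ∀ d, g (T d) = ⟪ℓ, (d : 𝓗)⟫ := by
    intro d
    have h1 : g (T d) = ⟪ℓ, (S ⟨T d, LinearMap.mem_range_self T d⟩ : 𝓗)⟫ :=
      hgf ⟨T d, LinearMap.mem_range_self T d⟩
    have h2 := hbN (S ⟨T d, LinearMap.mem_range_self T d⟩ - d)
    have h3 : T (S ⟨T d, LinearMap.mem_range_self T d⟩ - d) = 0 := by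
      rw [map_sub, hTS, sub_self]
    rw [h3] at h2
    simp only [N, map_zero, Real.sqrt_zero, mul_zero, Submodule.coe_sub, inner_sub_right] at h2
    have := abs_nonpos_iff.1 h2
    linarith
  have hgabs : ∀ p, |g p| ≤ N p := by
    intro p
    refine abs_le'.2 ⟨hgN p, ?_⟩
    have := hgN (-p)
    simpa [N] using this
  have hbd1 : ∀ x : 𝓕, ‖(g ∘ₗ LinearMap.inl ℝ 𝓕 𝓨) x‖ ≤
      C * Real.sqrt ‖(Q1 : 𝓕 →L[ℝ] 𝓕)‖ * ‖x‖ := by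
    intro x
    refine (hgabs _).trans ?_
    rw [mul_assoc]
    refine mul_le_mul_of_nonneg_left ?_ hC
    refine Real.sqrt_le_iff.2 ⟨by positivity, ?_⟩
    rw [mul_pow, Real.sq_sqrt (norm_nonneg _), hB, energyForm_apply]
    simp only [LinearMap.inl_apply, map_zero, inner_zero_left, add_zero]
    calc _ ≤ ‖(Q1 : 𝓕 →L[ℝ] 𝓕) x‖ * ‖x‖ := real_inner_le_norm _ _
      _ ≤ ‖(Q1 : 𝓕 →L[ℝ] 𝓕)‖ * ‖x‖ * ‖x‖ := by gcongr; exact ContinuousLinearMap.le_opNorm _ _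
      _ = _ := by ring
  have hbd2 : ∀ x : 𝓨, ‖(g ∘ₗ LinearMap.inr ℝ 𝓕 𝓨) x‖ ≤
      C * Real.sqrt ‖(Q2 : 𝓨 →L[ℝ] 𝓨)‖ * ‖x‖ := by
    intro x
    refine (hgabs _).trans ?_
    rw [mul_assoc]
    refine mul_le_mul_of_nonneg_left ?_ hC
    refine Real.sqrt_le_iff.2 ⟨by positivity, ?_⟩
    rw [mul_pow, Real.sq_sqrt (norm_nonneg _), hB, energyForm_apply]
    simp only [LinearMap.inr_apply, map_zero, inner_zero_left, zero_add]
    calc _ ≤ ‖(Q2 : 𝓨 →L[ℝ] 𝓨) x‖ * ‖x‖ := real_inner_le_norm _ _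
      _ ≤ ‖(Q2 : 𝓨 →L[ℝ] 𝓨)‖ * ‖x‖ * ‖x‖ := by gcongr; exact ContinuousLinearMap.le_opNorm _ _
      _ = _ := by ring
  let z := (InnerProductSpace.toDual ℝ 𝓕).symm (LinearMap.mkContinuous _ _ hbd1)
  let u := (InnerProductSpace.toDual ℝ 𝓨).symm (LinearMap.mkContinuous _ _ hbd2)
  have hz : ∀ x, ⟪z, x⟫ = g (x, 0) := fun x => InnerProductSpace.toDual_symm_apply
  have hu : ∀ x, ⟪u, x⟫ = g (0, x) := fun x => InnerProductSpace.toDual_symm_apply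
  have hg : ∀ x v, g (x, v) = ⟪z, x⟫ + ⟪u, v⟫ := by
    intro x v
    rw [hz, hu, ← map_add]
    simp
  refine ⟨Q1.symm z, Q2.symm u, fun d => ?_, ?_⟩
  · rw [← hgT]
    have h : g (T d) = ⟪z, L d⟫ + ⟪u, H d⟫ := hg (L d) (H d)
    simpa using h
  · have h := hgN (Q1.symm z, Q2.symm u)
    rw [hg] at h
    have hBW : B (Q1.symm z, Q2.symm u) (Q1.symm z, Q2.symm u) =
        ⟪z, Q1.symm z⟫ + ⟪u, Q2.symm u⟫ := by
      rw [hB, energyForm_apply]; simp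
    have hW := hBp (Q1.symm z, Q2.symm u)
    simp only [N] at h
    rw [hBW] at h hW
    simp only [ContinuousLinearEquiv.apply_symm_apply]
    -- the extension tested at its own representer: `W ≤ C √W`
    set W := ⟪z, Q1.symm z⟫ + ⟪u, Q2.symm u⟫
    have h2 := Real.sq_sqrt hW
    rcases (Real.sqrt_nonneg W).eq_or_lt with h0 | h0
    · rw [← h2, ← h0]; nlinarith
    · have : Real.sqrt W ≤ C := by nlinarith
      nlinarith

/-! ### Duality formula for the a priori error -/

/-- Bound on the mean-square error for bias `a` and weight `Q2 u`: the zero mean removes the cross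
term, and Cauchy–Schwarz in the `Q2`-form bounds the noise term. -/
theorem lintegral_sq_le {𝓨 : Type*}
    [NormedAddCommGroup 𝓨] [InnerProductSpace ℝ 𝓨] [CompleteSpace 𝓨]
    [MeasurableSpace 𝓨] [BorelSpace 𝓨] (Q2 : 𝓨 →L[ℝ] 𝓨)
    (hs2 : ∀ x y, ⟪Q2 x, y⟫ = ⟪Q2 y, x⟫) (hp2 : ∀ x, 0 ≤ ⟪Q2 x, x⟫)
    (μ : Measure 𝓨) (hμ : AdmissibleNoise Q2 μ) (a : ℝ) (u : 𝓨) :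
    ∫⁻ η, ENNReal.ofReal ((a - ⟪Q2 u, η⟫) ^ 2) ∂μ ≤ ENNReal.ofReal (a ^ 2 + ⟪Q2 u, u⟫) := by
  obtain ⟨hprob, hint, hmean, hE⟩ := hμ
  have hi2 : Integrable (fun η => ⟪Q2 η, η⟫) μ := by
    refine ⟨(by fun_prop : Continuous fun η : 𝓨 => ⟪Q2 η, η⟫).measurable.aestronglyMeasurable, ?_⟩
    rw [hasFiniteIntegral_iff_ofReal (.of_forall hp2)]
    exact hE.trans_lt ENNReal.one_lt_top
  have hi2le : ∫ η, ⟪Q2 η, η⟫ ∂μ ≤ 1 := by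
    rw [← ofReal_integral_eq_lintegral_ofReal hi2 (.of_forall hp2)] at hE
    exact ENNReal.ofReal_le_one.1 hE
  have hi1 : Integrable (fun η => ⟪Q2 u, η⟫) μ := hint.const_inner (Q2 u)
  have hm1 : ∫ η, ⟪Q2 u, η⟫ ∂μ = 0 := by
    have := integral_inner hint (Q2 u) (𝕜 := ℝ)
    simp only [id] at this
    rw [this, hmean, inner_zero_right]
  have hsq : ∀ η, ⟪Q2 u, η⟫ ^ 2 ≤ ⟪Q2 u, u⟫ * ⟪Q2 η, η⟫ := psd_cauchy_schwarz Q2 hs2 hp2 u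
  have hisub : Integrable (fun η => a ^ 2 - 2 * a * ⟪Q2 u, η⟫) μ :=
    (integrable_const _).sub (hi1.const_mul _)
  have hibd : Integrable (fun η => a ^ 2 - 2 * a * ⟪Q2 u, η⟫ + ⟪Q2 u, u⟫ * ⟪Q2 η, η⟫) μ :=
    hisub.add (hi2.const_mul _)
  have hpt : ∀ η, (a - ⟪Q2 u, η⟫) ^ 2 ≤
      a ^ 2 - 2 * a * ⟪Q2 u, η⟫ + ⟪Q2 u, u⟫ * ⟪Q2 η, η⟫ := fun η => by
    nlinarith [hsq η]
  calc _ ≤ ∫⁻ η, ENNReal.ofReal (a ^ 2 - 2 * a * ⟪Q2 u, η⟫ + ⟪Q2 u, u⟫ * ⟪Q2 η, η⟫) ∂μ :=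
        lintegral_mono fun η => ENNReal.ofReal_le_ofReal (hpt η)
    _ = ENNReal.ofReal (∫ η, (a ^ 2 - 2 * a * ⟪Q2 u, η⟫ + ⟪Q2 u, u⟫ * ⟪Q2 η, η⟫) ∂μ) :=
        (ofReal_integral_eq_lintegral_ofReal hibd
          (.of_forall fun η => (sq_nonneg _).trans (hpt η))).symm
    _ ≤ _ := by
        refine ENNReal.ofReal_le_ofReal ?_
        rw [integral_add hisub (hi2.const_mul _),
          integral_sub (integrable_const _) (hi1.const_mul _), integral_const_mul,
          integral_const_mul, hm1]
        simp only [integral_const, probReal_univ, one_smul]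
        nlinarith [hp2 u]

/-- Upper half of the duality `σ̂(ℓ) = sup {|(ℓ, d)| : (Q1 Ld, Ld) + (Q2 Hd, Hd) ≤ 1}`. -/
theorem minimaxErr_le {𝓗 𝓕 𝓨 : Type*}
    [NormedAddCommGroup 𝓗] [InnerProductSpace ℝ 𝓗]
    [NormedAddCommGroup 𝓕] [InnerProductSpace ℝ 𝓕] [CompleteSpace 𝓕]
    [NormedAddCommGroup 𝓨] [InnerProductSpace ℝ 𝓨] [CompleteSpace 𝓨]
    [MeasurableSpace 𝓨] [BorelSpace 𝓨]
    (L : 𝓗 →ₗ.[ℝ] 𝓕) (H : 𝓗 →L[ℝ] 𝓨) (Q1 : 𝓕 ≃L[ℝ] 𝓕) (Q2 : 𝓨 ≃L[ℝ] 𝓨)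
    (hs1 : ∀ x y, ⟪Q1 x, y⟫ = ⟪Q1 y, x⟫) (hs2 : ∀ x y, ⟪Q2 x, y⟫ = ⟪Q2 y, x⟫)
    (hp1 : ∀ x, 0 ≤ ⟪Q1 x, x⟫) (hp2 : ∀ x, 0 ≤ ⟪Q2 x, x⟫) (ℓ : 𝓗) (C : ℝ) (hC : 0 ≤ C)
    (hb : ∀ d : L.domain, ⟪Q1 (L d), L d⟫ + ⟪Q2 (H d), H d⟫ ≤ 1 → |⟪ℓ, (d : 𝓗)⟫| ≤ C) :
    minimaxErr L H (Q1 : 𝓕 →L[ℝ] 𝓕) (Q2 : 𝓨 →L[ℝ] 𝓨) ℓ ≤ ENNReal.ofReal (C ^ 2) := by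
  obtain ⟨z, u, hrep, hW⟩ := exists_dual_representation L H Q1 Q2 hs1 hs2 hp1 hp2 ℓ C hC hb
  refine (iInf₂_le (Q2 u) 0).trans ?_
  refine iSup₂_le fun φ hφ => iSup₂_le fun μ hμ => ?_
  have h := lintegral_sq_le (Q2 : 𝓨 →L[ℝ] 𝓨) hs2 hp2 μ hμ ⟪Q1 z, L φ⟫ u
  have heq : ∀ η, ⟪ℓ, (φ : 𝓗)⟫ - ⟪Q2 u, H φ + η⟫ - 0 = ⟪Q1 z, L φ⟫ - ⟪Q2 u, η⟫ := fun η => by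
    rw [hrep, inner_add_right]; ring
  simp only [heq]
  refine h.trans (ENNReal.ofReal_le_ofReal ?_)
  have h2 := psd_cauchy_schwarz (Q1 : 𝓕 →L[ℝ] 𝓕) hs1 hp1 z (L φ)
  simp only [ContinuousLinearEquiv.coe_coe] at h2 hφ ⊢
  nlinarith [hp1 z]

/-- The symmetric two-point noise at `±v`. -/
noncomputable def twoPoint {𝓨 : Type*} [NormedAddCommGroup 𝓨] [MeasurableSpace 𝓨] (v : 𝓨) :
    Measure 𝓨 :=
  (2⁻¹ : ℝ≥0∞) • Measure.dirac v + (2⁻¹ : ℝ≥0∞) • Measure.dirac (-v)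

theorem lintegral_twoPoint {𝓨 : Type*} [NormedAddCommGroup 𝓨] [MeasurableSpace 𝓨] [BorelSpace 𝓨]
    (v : 𝓨) (f : 𝓨 → ℝ) (hf : ∀ x, 0 ≤ f x) :
    ∫⁻ η, ENNReal.ofReal (f η) ∂(twoPoint v) = ENNReal.ofReal ((f v + f (-v)) / 2) := by
  rw [twoPoint, lintegral_add_measure, lintegral_smul_measure, lintegral_smul_measure,
    lintegral_dirac, lintegral_dirac, smul_eq_mul, smul_eq_mul, ← mul_add,
    ← ENNReal.ofReal_add (hf _) (hf _), div_eq_inv_mul, ENNReal.ofReal_mul (by norm_num),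
    ENNReal.ofReal_inv_of_pos (by norm_num), ENNReal.ofReal_ofNat]

theorem admissible_twoPoint {𝓨 : Type*}
    [NormedAddCommGroup 𝓨] [InnerProductSpace ℝ 𝓨] [CompleteSpace 𝓨]
    [MeasurableSpace 𝓨] [BorelSpace 𝓨] (Q2 : 𝓨 →L[ℝ] 𝓨)
    (hp2 : ∀ x, 0 ≤ ⟪Q2 x, x⟫) (v : 𝓨) (hv : ⟪Q2 v, v⟫ ≤ 1) :
    AdmissibleNoise Q2 (twoPoint v) := by
  have hi : ∀ w : 𝓨, Integrable id ((2⁻¹ : ℝ≥0∞) • Measure.dirac w) := fun w =>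
    (integrable_dirac (by simp)).smul_measure (by simp)
  refine ⟨⟨?_⟩, (hi v).add_measure (hi (-v)), ?_, ?_⟩
  · simp [twoPoint, ENNReal.inv_two_add_inv_two]
  · change ∫ η, id η ∂(twoPoint v) = 0
    rw [twoPoint, integral_add_measure (hi v) (hi (-v)), integral_smul_measure,
      integral_smul_measure, integral_dirac, integral_dirac, id, id, smul_neg, add_neg_cancel]
  · rw [lintegral_twoPoint v _ hp2, ENNReal.ofReal_le_one]
    simp only [map_neg, inner_neg_neg]
    linarith

/-- Lower half of the duality `σ̂(ℓ) = sup {|(ℓ, d)| : (Q1 Ld, Ld) + (Q2 Hd, Hd) ≤ 1}`: any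
estimate is tested on signals `± s d` corrupted by noise `± t Hd`. -/
theorem le_minimaxErr {𝓗 𝓕 𝓨 : Type*}
    [NormedAddCommGroup 𝓗] [InnerProductSpace ℝ 𝓗]
    [NormedAddCommGroup 𝓕] [InnerProductSpace ℝ 𝓕]
    [NormedAddCommGroup 𝓨] [InnerProductSpace ℝ 𝓨] [CompleteSpace 𝓨]
    [MeasurableSpace 𝓨] [BorelSpace 𝓨]
    (L : 𝓗 →ₗ.[ℝ] 𝓕) (H : 𝓗 →L[ℝ] 𝓨) (Q1 : 𝓕 →L[ℝ] 𝓕) (Q2 : 𝓨 →L[ℝ] 𝓨)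
    (hp1 : ∀ x, 0 ≤ ⟪Q1 x, x⟫) (hp2 : ∀ x, 0 ≤ ⟪Q2 x, x⟫) (ℓ : 𝓗) (d : L.domain)
    (hd : ⟪Q1 (L d), L d⟫ + ⟪Q2 (H d), H d⟫ ≤ 1) :
    ENNReal.ofReal (⟪ℓ, (d : 𝓗)⟫ ^ 2) ≤ minimaxErr L H Q1 Q2 ℓ := by
  refine le_iInf₂ fun u c => ?_
  set A := ⟪ℓ, (d : 𝓗)⟫ - ⟪u, H d⟫ with hA
  set B := ⟪u, H d⟫ with hB
  have key : ∀ s t : ℝ, s ^ 2 * ⟪Q1 (L d), L d⟫ ≤ 1 → t ^ 2 * ⟪Q2 (H d), H d⟫ ≤ 1 →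
      ENNReal.ofReal ((s * A - c) ^ 2 + t ^ 2 * B ^ 2) ≤ worstErr L H Q1 Q2 ℓ u c := by
    intro s t hs ht
    have hφ : ⟪Q1 (L (s • d)), L (s • d)⟫ ≤ 1 := by
      simp only [LinearPMap.map_smul, map_smul, real_inner_smul_left, real_inner_smul_right]
      linarith
    have hμ := admissible_twoPoint Q2 hp2 (t • H d) (by
      simp only [map_smul, real_inner_smul_left, real_inner_smul_right]
      linarith)
    refine le_trans (le_of_eq ?_) ((le_iSup₂ (twoPoint (t • H d)) hμ).trans (le_iSup₂
      (f := fun (φ : L.domain) (_ : ⟪Q1 (L φ), L φ⟫ ≤ 1) =>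
        ⨆ (μ : Measure 𝓨) (_ : AdmissibleNoise Q2 μ),
          ∫⁻ η, ENNReal.ofReal ((⟪ℓ, (φ : 𝓗)⟫ - ⟪u, H φ + η⟫ - c) ^ 2) ∂μ) (s • d) hφ))
    rw [lintegral_twoPoint _ _ (fun _ => sq_nonneg _)]
    congr 1
    simp only [Submodule.coe_smul, map_smul, inner_add_right, real_inner_smul_right,
      inner_neg_right, hA, hB]
    ring
  by_cases htop : worstErr L H Q1 Q2 ℓ u c = ⊤
  · rw [htop]; exact le_top
  set W := (worstErr L H Q1 Q2 ℓ u c).toReal with hW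
  have key' : ∀ s t : ℝ, s ^ 2 * ⟪Q1 (L d), L d⟫ ≤ 1 → t ^ 2 * ⟪Q2 (H d), H d⟫ ≤ 1 →
      s ^ 2 * A ^ 2 + t ^ 2 * B ^ 2 ≤ W := by
    intro s t hs ht
    have h1 := (ENNReal.ofReal_le_iff_le_toReal htop).1 (key s t hs ht)
    have h2 := (ENNReal.ofReal_le_iff_le_toReal htop).1 (key (-s) t (by simpa using hs) ht)
    nlinarith [sq_nonneg c]
  rw [ENNReal.ofReal_le_iff_le_toReal htop, ← hW]
  have hW0 : 0 ≤ W := ENNReal.toReal_nonneg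
  have ha := hp1 (L d)
  have hb := hp2 (H d)
  set a := ⟪Q1 (L d), L d⟫
  set b := ⟪Q2 (H d), H d⟫
  have hAB : ⟪ℓ, (d : 𝓗)⟫ = A + B := by rw [hA]; ring
  rw [hAB]
  -- weights `a + ε`, `b + ε` avoid the degenerate cases `Ld = 0`, `Hd = 0`
  have hε : ∀ ε : ℝ, 0 < ε → (A + B) ^ 2 ≤ W * (1 + 2 * ε) := by
    intro ε hε
    have h := key' (Real.sqrt (a + ε))⁻¹ (Real.sqrt (b + ε))⁻¹
      (by rw [inv_pow, Real.sq_sqrt (by positivity), inv_mul_le_iff₀ (by positivity)]; linarith)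
      (by rw [inv_pow, Real.sq_sqrt (by positivity), inv_mul_le_iff₀ (by positivity)]; linarith)
    rw [inv_pow, inv_pow, Real.sq_sqrt (by positivity), Real.sq_sqrt (by positivity)] at h
    have hx : 0 < a + ε := by positivity
    have hy : 0 < b + ε := by positivity
    have h2 : (A + B) ^ 2 ≤ ((a + ε)⁻¹ * A ^ 2 + (b + ε)⁻¹ * B ^ 2) * ((a + ε) + (b + ε)) := by
      have h3 : ((a + ε)⁻¹ * A ^ 2 + (b + ε)⁻¹ * B ^ 2) * ((a + ε) + (b + ε)) - (A + B) ^ 2 =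
          ((b + ε) * A - (a + ε) * B) ^ 2 / ((a + ε) * (b + ε)) := by
        field_simp
        ring
      have h4 : 0 ≤ ((b + ε) * A - (a + ε) * B) ^ 2 / ((a + ε) * (b + ε)) := by positivity
      linarith
    calc _ ≤ _ := h2
      _ ≤ W * ((a + ε) + (b + ε)) := by gcongr
      _ ≤ _ := by apply mul_le_mul_of_nonneg_left _ hW0; linarith
  refine le_of_forall_pos_le_add fun ε h0 => ?_
  have h := hε (ε / (2 * (W + 1))) (by positivity)
  have h2 : W * (1 + 2 * (ε / (2 * (W + 1)))) ≤ W + ε := by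
    have h3 : W * (2 * (ε / (2 * (W + 1)))) ≤ ε := by
      have h4 : W * (2 * (ε / (2 * (W + 1)))) = W * ε / (W + 1) := by field_simp
      rw [h4, div_le_iff₀ (by positivity)]
      nlinarith
    linarith
  linarith

/-! ### The a posteriori set as an energy ball -/

/-- The a posteriori set is the energy ball of squared radius `1 - (Q2 y, y - H φ̂)` around a
solution `φ̂` of the Euler–Lagrange system: the system kills the linear term of the functional,
and `(Q2 y, y - H φ̂)` is its minimal value. -/
theorem mem_aPostSet_iff {𝓗 𝓕 𝓨 : Type*}
    [NormedAddCommGroup 𝓗] [InnerProductSpace ℝ 𝓗] [CompleteSpace 𝓗]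
    [NormedAddCommGroup 𝓕] [InnerProductSpace ℝ 𝓕]
    [NormedAddCommGroup 𝓨] [InnerProductSpace ℝ 𝓨] [CompleteSpace 𝓨]
    (L : 𝓗 →ₗ.[ℝ] 𝓕) (hLdense : Dense (L.domain : Set 𝓗))
    (H : 𝓗 →L[ℝ] 𝓨) (Q1 : 𝓕 ≃L[ℝ] 𝓕) (Q2 : 𝓨 ≃L[ℝ] 𝓨)
    (hs1 : ∀ x y, ⟪Q1 x, y⟫ = ⟪Q1 y, x⟫) (hs2 : ∀ x y, ⟪Q2 x, y⟫ = ⟪Q2 y, x⟫) (y : 𝓨)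
    (qh : L.adjoint.domain) (φh : L.domain)
    (hsys₁ : L.adjoint qh =
      (ContinuousLinearMap.adjoint H) ((Q2 : 𝓨 →L[ℝ] 𝓨) (y - H (φh : 𝓗))))
    (hsys₂ : L φh = Q1.symm (qh : 𝓕)) (d : L.domain) :
    (φh : 𝓗) + d ∈ aPostSet L H (Q1 : 𝓕 →L[ℝ] 𝓕) (Q2 : 𝓨 →L[ℝ] 𝓨) y ↔
      ⟪Q1 (L d), L d⟫ + ⟪Q2 (H d), H d⟫ ≤ 1 - ⟪Q2 y, y - H (φh : 𝓗)⟫ := by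
  have hq : Q1 (L φh) = qh := by rw [hsys₂]; simp
  have hcross : ∀ e : L.domain, ⟪(qh : 𝓕), L e⟫ = ⟪Q2 (y - H (φh : 𝓗)), H e⟫ := by
    intro e
    rw [← LinearPMap.adjoint_isFormalAdjoint hLdense qh e, hsys₁,
      ContinuousLinearMap.adjoint_inner_left]
    rfl
  have hL : L (φh + d) = L φh + L d := L.map_add _ _
  have h1 := hcross d
  have h2 := hcross φh
  have hval : ⟪Q1 (L (φh + d)), L (φh + d)⟫ +
      ⟪Q2 (y - H ((φh : 𝓗) + d)), y - H ((φh : 𝓗) + d)⟫ =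
      ⟪Q1 (L d), L d⟫ + ⟪Q2 (H d), H d⟫ + ⟪Q2 y, y - H (φh : 𝓗)⟫ := by
    rw [hL, map_add H, ← sub_sub]
    set w := y - H (φh : 𝓗) with hw
    have hy : y = w + H (φh : 𝓗) := by rw [hw]; abel
    rw [hy]
    simp only [map_add, map_sub, inner_add_left, inner_add_right, inner_sub_left,
      inner_sub_right, hs1 (L d) (L φh), hs2 (H d) w, hs2 (H (φh : 𝓗)) w, hq]
    linarith
  constructor
  · rintro ⟨_, h⟩
    have h' : ⟪Q1 (L (φh + d)), L (φh + d)⟫ +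
      ⟪Q2 (y - H ((φh : 𝓗) + d)), y - H ((φh : 𝓗) + d)⟫ ≤ 1 := h
    linarith
  · intro h
    refine ⟨(φh + d).2, ?_⟩
    change ⟪Q1 (L (φh + d)), L (φh + d)⟫ +
      ⟪Q2 (y - H ((φh : 𝓗) + d)), y - H ((φh : 𝓗) + d)⟫ ≤ 1
    linarith

/-- **Theorem 3 (Chebyshev center of the a posteriori set).** -/
theorem aposteriori_chebyshev_center {𝓗 𝓕 𝓨 : Type*}
    [NormedAddCommGroup 𝓗] [InnerProductSpace ℝ 𝓗] [CompleteSpace 𝓗]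
    [NormedAddCommGroup 𝓕] [InnerProductSpace ℝ 𝓕] [CompleteSpace 𝓕]
    [NormedAddCommGroup 𝓨] [InnerProductSpace ℝ 𝓨] [CompleteSpace 𝓨]
    [MeasurableSpace 𝓨] [BorelSpace 𝓨]
    -- `L` closed densely defined
    (L : 𝓗 →ₗ.[ℝ] 𝓕) (hLdense : Dense (L.domain : Set 𝓗))
    (hLclosed : IsClosed (L.graph : Set (𝓗 × 𝓕)))
    (H : 𝓗 →L[ℝ] 𝓨)
    -- `Q1`, `Q2` bounded self-adjoint positive definite with bounded inverses
    (Q1 : 𝓕 ≃L[ℝ] 𝓕) (Q2 : 𝓨 ≃L[ℝ] 𝓨)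
    (hQ1sa : IsSelfAdjoint (Q1 : 𝓕 →L[ℝ] 𝓕))
    (hQ2sa : IsSelfAdjoint (Q2 : 𝓨 →L[ℝ] 𝓨))
    (hQ1pos : ∀ f : 𝓕, f ≠ 0 → 0 < ⟪Q1 f, f⟫)
    (hQ2pos : ∀ y : 𝓨, y ≠ 0 → 0 < ⟪Q2 y, y⟫)
    -- Assumption 1 or Assumption 2
    (hassumption :
      (IsClosed {f : 𝓕 | ∃ x : L.domain, L x = f} ∧
        IsClosed (H '' {x : 𝓗 | ∃ hx : x ∈ L.domain, L ⟨x, hx⟩ = 0})) ∨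
      IsClosed {p : 𝓕 × 𝓨 | ∃ x : L.domain, p = (L x, H (x : 𝓗))})
    -- observation; the a posteriori set is nonempty
    (y : 𝓨)
    (hne : (aPostSet L H (Q1 : 𝓕 →L[ℝ] 𝓕) (Q2 : 𝓨 →L[ℝ] 𝓨) y).Nonempty)
    -- the minimax a posteriori error is finite in every direction
    (hfin : ∀ ℓ : 𝓗, rhoHat L H (Q1 : 𝓕 →L[ℝ] 𝓕) (Q2 : 𝓨 →L[ℝ] 𝓨) y ℓ < ⊤)
    -- `(q̂, φ̂)` solves `L* q̂ = H* Q2 (y − H φ̂)`, `L φ̂ = Q1⁻¹ q̂`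
    (qh : L.adjoint.domain) (φh : L.domain)
    (hsys₁ : L.adjoint qh =
      (ContinuousLinearMap.adjoint H) ((Q2 : 𝓨 →L[ℝ] 𝓨) (y - H (φh : 𝓗))))
    (hsys₂ : L φh = Q1.symm (qh : 𝓕)) :
    -- `φ̂` is a Chebyshev center of `G_y`:
    (⨅ (φ : 𝓗) (_ : φ ∈ aPostSet L H (Q1 : 𝓕 →L[ℝ] 𝓕) (Q2 : 𝓨 →L[ℝ] 𝓨) y),
      ⨆ (x : 𝓗) (_ : x ∈ aPostSet L H (Q1 : 𝓕 →L[ℝ] 𝓕) (Q2 : 𝓨 →L[ℝ] 𝓨) y),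
        ENNReal.ofReal ‖φ - x‖)
      = (⨆ (x : 𝓗)
          (_ : x ∈ aPostSet L H (Q1 : 𝓕 →L[ℝ] 𝓕) (Q2 : 𝓨 →L[ℝ] 𝓨) y),
          ENNReal.ofReal ‖(φh : 𝓗) - x‖) ∧
    -- ... with value `(1 − (Q2 y, y − H φ̂))^{1/2} max_{‖ℓ‖=1} σ̂(ℓ)`
    (⨆ (x : 𝓗) (_ : x ∈ aPostSet L H (Q1 : 𝓕 →L[ℝ] 𝓕) (Q2 : 𝓨 →L[ℝ] 𝓨) y),
        ENNReal.ofReal ‖(φh : 𝓗) - x‖)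
      = ENNReal.ofReal
            (Real.sqrt (1 - ⟪(Q2 : 𝓨 →L[ℝ] 𝓨) y, y - H (φh : 𝓗)⟫)) *
          ⨆ (ℓ : 𝓗) (_ : ‖ℓ‖ = 1),
            ENNReal.ofReal
              (Real.sqrt
                (minimaxErr L H (Q1 : 𝓕 →L[ℝ] 𝓕) (Q2 : 𝓨 →L[ℝ] 𝓨) ℓ).toReal) := by
  have hs1 : ∀ x y, ⟪Q1 x, y⟫ = ⟪Q1 y, x⟫ := fun x y => by
    have := hQ1sa.isSymmetric x y
    rw [real_inner_comm x (Q1 y)]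
    exact this
  have hs2 : ∀ x y, ⟪Q2 x, y⟫ = ⟪Q2 y, x⟫ := fun x y => by
    have := hQ2sa.isSymmetric x y
    rw [real_inner_comm x (Q2 y)]
    exact this
  have hp1 : ∀ x, 0 ≤ ⟪Q1 x, x⟫ := fun x => by
    rcases eq_or_ne x 0 with rfl | h
    · simp
    · exact (hQ1pos x h).le
  have hp2 : ∀ x, 0 ≤ ⟪Q2 x, x⟫ := fun x => by
    rcases eq_or_ne x 0 with rfl | h
    · simp
    · exact (hQ2pos x h).le
  have hmem := mem_aPostSet_iff L hLdense H Q1 Q2 hs1 hs2 y qh φh hsys₁ hsys₂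
  set G := aPostSet L H (Q1 : 𝓕 →L[ℝ] 𝓕) (Q2 : 𝓨 →L[ℝ] 𝓨) y with hG
  simp only [ContinuousLinearEquiv.coe_coe]
  set κ := 1 - ⟪Q2 y, y - H (φh : 𝓗)⟫ with hκ
  have hdecomp : ∀ x ∈ G, ∃ d : L.domain, x = (φh : 𝓗) + d ∧
      ⟪Q1 (L d), L d⟫ + ⟪Q2 (H d), H d⟫ ≤ κ := by
    intro x hx
    have hxd : x ∈ L.domain := hx.1
    have hxe : x = (φh : 𝓗) + ((⟨x, hxd⟩ - φh : L.domain) : 𝓗) := by simp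
    refine ⟨⟨x, hxd⟩ - φh, hxe, (hmem _).1 ?_⟩
    rw [← hxe]
    exact hx
  have hscale : ∀ (t : ℝ) (d : L.domain),
      ⟪Q1 (L (t • d)), L (t • d)⟫ + ⟪Q2 (H ((t • d : L.domain) : 𝓗)), H ((t • d : L.domain) : 𝓗)⟫ =
        t ^ 2 * (⟪Q1 (L d), L d⟫ + ⟪Q2 (H d), H d⟫) := by
    intro t d
    simp only [LinearPMap.map_smul, Submodule.coe_smul, map_smul, real_inner_smul_left,
      real_inner_smul_right]
    ring
  have hneg : ∀ d : L.domain, ⟪Q1 (L d), L d⟫ + ⟪Q2 (H d), H d⟫ ≤ κ →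
      (φh : 𝓗) - d ∈ G := by
    intro d hd
    have h := (hmem ((-1 : ℝ) • d)).2 (by rw [hscale]; linarith)
    simpa [sub_eq_add_neg] using h
  have hκ0 : 0 ≤ κ := by
    obtain ⟨x, hx⟩ := hne
    obtain ⟨d, -, hd⟩ := hdecomp x hx
    exact (add_nonneg (hp1 _) (hp2 _)).trans hd
  have hφG : (φh : 𝓗) ∈ G := by
    have h := (hmem 0).2 (by simpa using hκ0)
    simpa using h
  -- finiteness of `ρ̂` at one competitor passes to the center by symmetry of `G`
  have hbound : ∀ ℓ : 𝓗, ∃ C : ℝ, 0 ≤ C ∧ ∀ d : L.domain,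
      ⟪Q1 (L d), L d⟫ + ⟪Q2 (H d), H d⟫ ≤ κ → |⟪ℓ, (d : 𝓗)⟫| ≤ C := by
    intro ℓ
    have h := hfin ℓ
    simp only [rhoHat, iInf_lt_iff] at h
    obtain ⟨φ, hφ, h⟩ := h
    set S := ⨆ (ψ : 𝓗) (_ : ψ ∈ G), ENNReal.ofReal |⟪ℓ, φ⟫ - ⟪ℓ, ψ⟫| with hS
    have hle : ∀ ψ ∈ G, |⟪ℓ, φ⟫ - ⟪ℓ, ψ⟫| ≤ S.toReal := fun ψ hψ =>
      (ENNReal.ofReal_le_iff_le_toReal h.ne).1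
        (le_iSup₂ (f := fun (ψ : 𝓗) (_ : ψ ∈ G) => ENNReal.ofReal |⟪ℓ, φ⟫ - ⟪ℓ, ψ⟫|) ψ hψ)
    refine ⟨S.toReal, ENNReal.toReal_nonneg, fun d hd => ?_⟩
    have h1 := abs_le.1 (hle _ ((hmem d).2 hd))
    have h2 := abs_le.1 (hle _ (hneg d hd))
    rw [inner_add_right] at h1
    rw [inner_sub_right] at h2
    exact abs_le.2 ⟨by linarith [h1.2, h2.1], by linarith [h1.1, h2.2]⟩
  refine ⟨le_antisymm (iInf₂_le (φh : 𝓗) hφG) ?_, le_antisymm ?_ ?_⟩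
  · refine le_iInf₂ fun φ hφ => iSup₂_le fun x hx => ?_
    obtain ⟨d, rfl, hd⟩ := hdecomp x hx
    have hplus := (hmem d).2 hd
    have hminus := hneg d hd
    -- one of the two reflected points `φ̂ ± d` is at distance at least `‖d‖` from `φ`
    have htri : ‖(d : 𝓗)‖ ≤ max ‖φ - (φh + d)‖ ‖φ - (φh - d)‖ := by
      have h1 : (2 : ℝ) • (d : 𝓗) = (φ - (φh - d)) - (φ - (φh + d)) := by
        rw [two_smul]; abel
      have h2 := norm_sub_le (φ - ((φh : 𝓗) - d)) (φ - (φh + d))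
      rw [← h1, norm_smul, Real.norm_ofNat] at h2
      rcases le_total ‖φ - ((φh : 𝓗) + d)‖ ‖φ - ((φh : 𝓗) - d)‖ with h | h
      · rw [max_eq_right h]; linarith
      · rw [max_eq_left h]; linarith
    have hx : ‖(φh : 𝓗) - (φh + d)‖ = ‖(d : 𝓗)‖ := by simp
    rw [hx]
    rcases le_max_iff.1 htri with h | h
    · exact (ENNReal.ofReal_le_ofReal h).trans
        (le_iSup₂ (f := fun (x : 𝓗) (_ : x ∈ G) => ENNReal.ofReal ‖φ - x‖) _ hplus)
    · exact (ENNReal.ofReal_le_ofReal h).trans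
        (le_iSup₂ (f := fun (x : 𝓗) (_ : x ∈ G) => ENNReal.ofReal ‖φ - x‖) _ hminus)
  · refine iSup₂_le fun x hx => ?_
    obtain ⟨d, rfl, hd⟩ := hdecomp x hx
    have hx : ‖(φh : 𝓗) - (φh + d)‖ = ‖(d : 𝓗)‖ := by simp
    rw [hx]
    rcases eq_or_ne (d : 𝓗) 0 with h0 | h0
    · simp [h0]
    have hdn : 0 < ‖(d : 𝓗)‖ := norm_pos_iff.2 h0
    rcases hκ0.eq_or_lt with hz | hpos
    · -- zero radius: all multiples of `d` stay in the ball, which is bounded in the direction `d`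
      exfalso
      obtain ⟨C, hC0, hC⟩ := hbound d
      have h := hC (((C + 1) / ‖(d : 𝓗)‖ ^ 2) • d) (by
        rw [hscale, ← hz]
        rw [← hz] at hd
        exact mul_nonpos_of_nonneg_of_nonpos (sq_nonneg _) hd)
      rw [Submodule.coe_smul, real_inner_smul_right, real_inner_self_eq_norm_sq,
        div_mul_cancel₀ _ (by positivity), abs_of_pos (by positivity)] at h
      linarith
    · set r := Real.sqrt κ with hr
      have hr0 : 0 < r := Real.sqrt_pos.2 hpos
      have hr2 : r ^ 2 = κ := Real.sq_sqrt hκ0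
      set ℓ : 𝓗 := ‖(d : 𝓗)‖⁻¹ • (d : 𝓗) with hℓ
      have hℓ1 : ‖ℓ‖ = 1 := by
        rw [hℓ, norm_smul, norm_inv, norm_norm, inv_mul_cancel₀ hdn.ne']
      set M := minimaxErr L H (Q1 : 𝓕 →L[ℝ] 𝓕) (Q2 : 𝓨 →L[ℝ] 𝓨) ℓ with hM
      have hMtop : M ≠ ⊤ := by
        obtain ⟨C, hC0, hC⟩ := hbound ℓ
        refine ne_top_of_le_ne_top ENNReal.ofReal_ne_top
          (minimaxErr_le L H Q1 Q2 hs1 hs2 hp1 hp2 ℓ (C / r) (by positivity) fun e he => ?_)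
        have h := hC (r • e) (by rw [hscale, hr2]; nlinarith)
        rw [Submodule.coe_smul, real_inner_smul_right, abs_mul, abs_of_pos hr0] at h
        rw [le_div_iff₀ hr0]
        linarith
      have hlow := le_minimaxErr L H (Q1 : 𝓕 →L[ℝ] 𝓕) (Q2 : 𝓨 →L[ℝ] 𝓨) hp1 hp2 ℓ (r⁻¹ • d) (by
        refine (hscale _ _).trans_le ?_
        rw [inv_pow, hr2, inv_mul_le_iff₀ hpos]
        linarith)
      rw [← hM, ENNReal.ofReal_le_iff_le_toReal hMtop] at hlow
      have hin : ⟪ℓ, ((r⁻¹ • d : L.domain) : 𝓗)⟫ = r⁻¹ * ‖(d : 𝓗)‖ := by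
        rw [hℓ, Submodule.coe_smul, real_inner_smul_right, real_inner_smul_left,
          real_inner_self_eq_norm_sq]
        field_simp
      rw [hin] at hlow
      have hle : ‖(d : 𝓗)‖ ≤ r * Real.sqrt M.toReal := by
        have := Real.le_sqrt_of_sq_le hlow
        rwa [inv_mul_le_iff₀ hr0] at this
      calc ENNReal.ofReal ‖(d : 𝓗)‖ ≤ ENNReal.ofReal r * ENNReal.ofReal (Real.sqrt M.toReal) := by
            rw [← ENNReal.ofReal_mul hr0.le]
            exact ENNReal.ofReal_le_ofReal hle
        _ ≤ _ := by
            gcongr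
            exact le_iSup₂ (f := fun (ℓ : 𝓗) (_ : ‖ℓ‖ = 1) => ENNReal.ofReal (Real.sqrt
              (minimaxErr L H (Q1 : 𝓕 →L[ℝ] 𝓕) (Q2 : 𝓨 →L[ℝ] 𝓨) ℓ).toReal)) ℓ hℓ1
  · simp only [ENNReal.mul_iSup]
    refine iSup₂_le fun ℓ hℓ1 => ?_
    set R := ⨆ (x : 𝓗) (_ : x ∈ G), ENNReal.ofReal ‖(φh : 𝓗) - x‖ with hR
    by_cases hRtop : R = ⊤
    · rw [hRtop]; exact le_top
    rcases hκ0.eq_or_lt with hz | hpos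
    · simp [← hz]
    set r := Real.sqrt κ with hr
    have hr0 : 0 < r := Real.sqrt_pos.2 hpos
    have hr2 : r ^ 2 = κ := Real.sq_sqrt hκ0
    have hRle : ∀ x ∈ G, ‖(φh : 𝓗) - x‖ ≤ R.toReal := fun x hx =>
      (ENNReal.ofReal_le_iff_le_toReal hRtop).1
        (le_iSup₂ (f := fun (x : 𝓗) (_ : x ∈ G) => ENNReal.ofReal ‖(φh : 𝓗) - x‖) x hx)
    have hR0 : 0 ≤ R.toReal := ENNReal.toReal_nonneg
    have hup := minimaxErr_le L H Q1 Q2 hs1 hs2 hp1 hp2 ℓ (R.toReal / r) (by positivity)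
      fun e he => by
        have h := hRle _ ((hmem (r • e)).2 (by rw [hscale, hr2]; nlinarith))
        rw [sub_add_cancel_left, norm_neg, Submodule.coe_smul, norm_smul, Real.norm_eq_abs,
          abs_of_pos hr0] at h
        have h2 := abs_real_inner_le_norm ℓ (e : 𝓗)
        rw [hℓ1, one_mul] at h2
        rw [le_div_iff₀ hr0]
        nlinarith
    have hsq := Real.sqrt_le_sqrt (ENNReal.toReal_le_of_le_ofReal (by positivity) hup)
    rw [Real.sqrt_sq (by positivity), le_div_iff₀ hr0] at hsq
    rw [← ENNReal.ofReal_mul hr0.le]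
    refine ENNReal.ofReal_le_of_le_toReal ?_
    linarith
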